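/- arXiv:1408.3699 — 2 statements merged into one kernel-verified Lean document; each statement's English description precedes it below -/
import Mathlib

section
/- Let S be a topological semigroup with identity. If every subsemigroup of S generated by a finite subset together with the identity is amenable (with the subspace topology), then S is amenable. -/
open BoundedContinuousFunction MeasureTheory Filter Topology

noncomputable section

namespace Paper

variable {S : Type*} [Semigroup S] [TopologicalSpace S] [ContinuousMul S]

/-- Left translate: `(f·s)(t) = f (s * t)`. -/
def lTrans (f : S →ᵇ ℝ) (s : S) : S →ᵇ ℝ :=
  f.compContinuous ⟨fun t => s * t, continuous_mul_left s⟩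

/-- Right translate: `(s·f)(t) = f (t * s)`. -/
def rTrans (f : S →ᵇ ℝ) (s : S) : S →ᵇ ℝ :=
  f.compContinuous ⟨fun t => t * s, continuous_mul_right s⟩

@[simp] lemma lTrans_apply (f : S →ᵇ ℝ) (s t : S) : lTrans f s t = f (s * t) := rfl
@[simp] lemma rTrans_apply (f : S →ᵇ ℝ) (s t : S) : rTrans f s t = f (t * s) := rfl

variable (S) in
/-- The space of left uniformly continuous bounded functions on `S`. -/
def LUC : Submodule ℝ (S →ᵇ ℝ) where
  carrier := {f | Continuous fun s => lTrans f s}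
  add_mem' {f g} hf hg := by
    show Continuous fun s => lTrans (f + g) s
    have h : (fun s => lTrans (f + g) s) = fun s => lTrans f s + lTrans g s := by
      funext s; ext t; simp
    rw [h]; exact Continuous.add hf hg
  zero_mem' := by
    show Continuous fun s : S => lTrans (0 : S →ᵇ ℝ) s
    have h : (fun s : S => lTrans (0 : S →ᵇ ℝ) s) = fun _ => (0 : S →ᵇ ℝ) := by
      funext s; ext t; simp
    rw [h]; exact continuous_const
  smul_mem' r f hf := by
    show Continuous fun s => lTrans (r • f) s
    have h : (fun s => lTrans (r • f) s) = fun s => r • lTrans f s := by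
      funext s; ext t; simp
    rw [h]; exact Continuous.const_smul hf r

variable (S) in
/-- The space of right uniformly continuous bounded functions on `S`. -/
def RUC : Submodule ℝ (S →ᵇ ℝ) where
  carrier := {f | Continuous fun s => rTrans f s}
  add_mem' {f g} hf hg := by
    show Continuous fun s => rTrans (f + g) s
    have h : (fun s => rTrans (f + g) s) = fun s => rTrans f s + rTrans g s := by
      funext s; ext t; simp
    rw [h]; exact Continuous.add hf hg
  zero_mem' := by
    show Continuous fun s : S => rTrans (0 : S →ᵇ ℝ) s
    have h : (fun s : S => rTrans (0 : S →ᵇ ℝ) s) = fun _ => (0 : S →ᵇ ℝ) := by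
      funext s; ext t; simp
    rw [h]; exact continuous_const
  smul_mem' r f hf := by
    show Continuous fun s => rTrans (r • f) s
    have h : (fun s => rTrans (r • f) s) = fun s => r • rTrans f s := by
      funext s; ext t; simp
    rw [h]; exact Continuous.const_smul hf r

lemma mem_LUC_iff {f : S →ᵇ ℝ} : f ∈ LUC S ↔ Continuous fun s => lTrans f s := Iff.rfl

lemma mem_RUC_iff {f : S →ᵇ ℝ} : f ∈ RUC S ↔ Continuous fun s => rTrans f s := Iff.rfl

lemma one_mem_LUC : (1 : S →ᵇ ℝ) ∈ LUC S := by
  rw [mem_LUC_iff]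
  have h : (fun s : S => lTrans (1 : S →ᵇ ℝ) s) = fun _ => (1 : S →ᵇ ℝ) := by
    funext s; ext t; simp
  rw [h]; exact continuous_const

lemma one_mem_RUC : (1 : S →ᵇ ℝ) ∈ RUC S := by
  rw [mem_RUC_iff]
  have h : (fun s : S => rTrans (1 : S →ᵇ ℝ) s) = fun _ => (1 : S →ᵇ ℝ) := by
    funext s; ext t; simp
  rw [h]; exact continuous_const

lemma mul_mem_LUC {f g : S →ᵇ ℝ} (hf : f ∈ LUC S) (hg : g ∈ LUC S) : f * g ∈ LUC S := by
  rw [mem_LUC_iff] at *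
  have h : (fun s => lTrans (f * g) s) = fun s => lTrans f s * lTrans g s := by
    funext s; ext t; simp
  rw [h]; exact Continuous.mul hf hg

lemma mul_mem_RUC {f g : S →ᵇ ℝ} (hf : f ∈ RUC S) (hg : g ∈ RUC S) : f * g ∈ RUC S := by
  rw [mem_RUC_iff] at *
  have h : (fun s => rTrans (f * g) s) = fun s => rTrans f s * rTrans g s := by
    funext s; ext t; simp
  rw [h]; exact Continuous.mul hf hg

lemma lTrans_mem {f : S →ᵇ ℝ} (hf : f ∈ LUC S) (s : S) : lTrans f s ∈ LUC S := by
  rw [mem_LUC_iff] at *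
  have h : (fun t => lTrans (lTrans f s) t) = fun t => lTrans f (s * t) := by
    funext t; ext u; simp [mul_assoc]
  rw [h]; exact hf.comp (continuous_mul_left s)

lemma rTrans_mem {f : S →ᵇ ℝ} (hf : f ∈ RUC S) (s : S) : rTrans f s ∈ RUC S := by
  rw [mem_RUC_iff] at *
  have h : (fun t => rTrans (rTrans f s) t) = fun t => rTrans f (t * s) := by
    funext t; ext u; simp [mul_assoc]
  rw [h]; exact hf.comp (continuous_mul_right s)

variable (S) in
/-- `I` is a left invariant mean on `LUC S`. -/
def IsLeftInvariantMean (I : LUC S →ₗ[ℝ] ℝ) : Prop :=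
  I ⟨1, one_mem_LUC⟩ = 1 ∧
  (∀ f : LUC S, 0 ≤ (f : S →ᵇ ℝ) → 0 ≤ I f) ∧
  ∀ (f : S →ᵇ ℝ) (hf : f ∈ LUC S) (s : S),
    I ⟨lTrans f s, lTrans_mem hf s⟩ = I ⟨f, hf⟩

variable (S) in
/-- `I` is a right invariant mean on `RUC S`. -/
def IsRightInvariantMean (I : RUC S →ₗ[ℝ] ℝ) : Prop :=
  I ⟨1, one_mem_RUC⟩ = 1 ∧
  (∀ f : RUC S, 0 ≤ (f : S →ᵇ ℝ) → 0 ≤ I f) ∧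
  ∀ (f : S →ᵇ ℝ) (hf : f ∈ RUC S) (s : S),
    I ⟨rTrans f s, rTrans_mem hf s⟩ = I ⟨f, hf⟩

variable (S) in
def LeftAmenable : Prop := ∃ I : LUC S →ₗ[ℝ] ℝ, IsLeftInvariantMean S I

variable (S) in
def RightAmenable : Prop := ∃ I : RUC S →ₗ[ℝ] ℝ, IsRightInvariantMean S I

variable (S) in
/-- A topological semigroup is amenable if `LUC` admits a left invariant mean and
`RUC` admits a right invariant mean. -/
def Amenable : Prop := LeftAmenable S ∧ RightAmenable S

variable (S) in
/-- `I` is a multiplicative left invariant mean on `LUC S`. -/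
def IsMultLeftInvariantMean (I : LUC S →ₗ[ℝ] ℝ) : Prop :=
  IsLeftInvariantMean S I ∧
  ∀ (f g : S →ᵇ ℝ) (hf : f ∈ LUC S) (hg : g ∈ LUC S),
    I ⟨f * g, mul_mem_LUC hf hg⟩ = I ⟨f, hf⟩ * I ⟨g, hg⟩

variable (S) in
def IsMultRightInvariantMean (I : RUC S →ₗ[ℝ] ℝ) : Prop :=
  IsRightInvariantMean S I ∧
  ∀ (f g : S →ᵇ ℝ) (hf : f ∈ RUC S) (hg : g ∈ RUC S),
    I ⟨f * g, mul_mem_RUC hf hg⟩ = I ⟨f, hf⟩ * I ⟨g, hg⟩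

variable (S) in
def ExtremelyLeftAmenable : Prop := ∃ I : LUC S →ₗ[ℝ] ℝ, IsMultLeftInvariantMean S I

variable (S) in
def ExtremelyRightAmenable : Prop := ∃ I : RUC S →ₗ[ℝ] ℝ, IsMultRightInvariantMean S I

variable (S) in
def ExtremelyAmenable : Prop := ExtremelyLeftAmenable S ∧ ExtremelyRightAmenable S


/-!
The means on a space of bounded functions containing `1` form a compact set for pointwise
convergence, and invariance under one translation is a closed condition on a mean. By compactness,
an invariant mean exists as soon as every finite set of translations fixes some mean. An invariant
mean of an amenable subsemigroup `T`, applied to restrictions to `T`, is fixed by the translations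
by elements of `T`. Finally, on `LUC` and `RUC` means are norm continuous and so are the orbit
maps, so that invariance under a dense set of translations is enough.
-/

section Mean

variable {X : Type*} [TopologicalSpace X] {V : Submodule ℝ (X →ᵇ ℝ)} {h1 : (1 : X →ᵇ ℝ) ∈ V}
  {I : V →ₗ[ℝ] ℝ}

/-- Means on a space `V` of bounded continuous functions: the positive linear functionals taking the
value `1` at the constant function `1`. The membership `1 ∈ V` is an argument so that the same
notion serves `LUC` and `RUC`. -/
structure IsMean (h1 : (1 : X →ᵇ ℝ) ∈ V) (I : V →ₗ[ℝ] ℝ) : Prop where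
  map_one : I ⟨1, h1⟩ = 1
  map_nonneg : ∀ f : V, 0 ≤ (f : X →ᵇ ℝ) → 0 ≤ I f

namespace IsMean

lemma neg_norm_le_apply (hI : IsMean h1 I) (f : V) : -‖f‖ ≤ I f := by
  have hnonneg : 0 ≤ I (‖f‖ • ⟨1, h1⟩ + f) := hI.map_nonneg _ fun x => by
    simpa [neg_le_iff_add_nonneg'] using (f : X →ᵇ ℝ).neg_norm_le_apply x
  rw [map_add, map_smul, hI.map_one, smul_eq_mul, mul_one] at hnonneg
  exact neg_le_iff_add_nonneg'.2 hnonneg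

lemma abs_apply_le_norm (hI : IsMean h1 I) (f : V) : |I f| ≤ ‖f‖ := by
  have hneg : I (-f) = -I f := LinearMap.map_neg I f
  have hupper : I f ≤ ‖f‖ := calc
    I f = -I (-f) := by rw [hneg, neg_neg]
    _ ≤ ‖-f‖ := neg_le.1 (hI.neg_norm_le_apply (-f))
    _ = ‖f‖ := norm_neg (f : X →ᵇ ℝ)
  exact abs_le.2 ⟨hI.neg_norm_le_apply f, hupper⟩

lemma continuous (hI : IsMean h1 I) : Continuous I :=
  AddMonoidHomClass.continuous_of_bound I 1 fun f => by simpa using hI.abs_apply_le_norm f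

lemma comp_compContinuous {Y : Type*} [TopologicalSpace Y] {W : Submodule ℝ (Y →ᵇ ℝ)}
    {hW : (1 : Y →ᵇ ℝ) ∈ W} {J : W →ₗ[ℝ] ℝ} (hJ : IsMean hW J) (g : C(Y, X))
    (hg : ∀ f ∈ V, compContinuousCLM ℝ ℝ g f ∈ W) :
    IsMean h1 (J ∘ₗ (compContinuousCLM ℝ ℝ g).toLinearMap.restrict hg) where
  map_one := hJ.map_one
  map_nonneg _ hf := hJ.map_nonneg _ fun y => hf (g y)

lemma apply_eq_of_dense (hI : IsMean h1 I) {A : Type*} [TopologicalSpace A] {τ : A → V → V}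
    (hτ : ∀ f, Continuous fun a => τ a f) {D : Set A} (hD : Dense D)
    (hinv : ∀ a ∈ D, ∀ f, I (τ a f) = I f) (a : A) (f : V) : I (τ a f) = I f :=
  congrFun ((hI.continuous.comp (hτ f)).ext_on hD continuous_const fun b hb => hinv b hb f) a

end IsMean

lemma isClosed_coe_image_setOf_isMean (h1 : (1 : X →ᵇ ℝ) ∈ V) :
    IsClosed ((fun I : V →ₗ[ℝ] ℝ => (I : V → ℝ)) '' {I | IsMean h1 I}) := by
  have himage : (fun I : V →ₗ[ℝ] ℝ => (I : V → ℝ)) '' {I | IsMean h1 I} =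
      Set.range (fun I : V →ₗ[ℝ] ℝ => (I : V → ℝ)) ∩
        ({φ | φ ⟨1, h1⟩ = 1} ∩ {φ | ∀ f : V, 0 ≤ (f : X →ᵇ ℝ) → 0 ≤ φ f}) := by
    ext φ
    constructor
    · rintro ⟨I, hI, rfl⟩
      exact ⟨⟨I, rfl⟩, hI.map_one, hI.map_nonneg⟩
    · rintro ⟨⟨I, rfl⟩, hone, hnonneg⟩
      exact ⟨I, ⟨hone, hnonneg⟩, rfl⟩
  have hone : IsClosed {φ : V → ℝ | φ ⟨1, h1⟩ = 1} :=
    isClosed_eq (continuous_apply _) continuous_const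
  have hnonneg : IsClosed {φ : V → ℝ | ∀ f : V, 0 ≤ (f : X →ᵇ ℝ) → 0 ≤ φ f} := by
    simp only [Set.ofPred_forall]
    exact isClosed_iInter fun f => isClosed_iInter fun _ =>
      isClosed_le continuous_const (continuous_apply f)
  rw [himage]
  exact (LinearMap.isClosed_range_coe V ℝ (RingHom.id ℝ)).inter (hone.inter hnonneg)

lemma isCompact_coe_image_setOf_isMean (h1 : (1 : X →ᵇ ℝ) ∈ V) :
    IsCompact ((fun I : V →ₗ[ℝ] ℝ => (I : V → ℝ)) '' {I | IsMean h1 I}) := by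
  have hbox : IsCompact (Set.univ.pi fun f : V => Set.Icc (-‖f‖) ‖f‖) :=
    isCompact_univ_pi fun _ => isCompact_Icc
  refine hbox.of_isClosed_subset (isClosed_coe_image_setOf_isMean h1) ?_
  rintro _ ⟨I, hI, rfl⟩ f -
  exact abs_le.1 (hI.abs_apply_le_norm f)

lemma exists_isMean_invariant_of_finset {A : Type*} (τ : A → V → V)
    (h : ∀ F : Finset A, ∃ I, IsMean h1 I ∧ ∀ a ∈ F, ∀ f, I (τ a f) = I f) :
    ∃ I, IsMean h1 I ∧ ∀ a f, I (τ a f) = I f := by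
  have hclosed (a : A) : IsClosed {φ : V → ℝ | ∀ f, φ (τ a f) = φ f} := by
    simp only [Set.ofPred_forall]
    exact isClosed_iInter fun f => isClosed_eq (continuous_apply _) (continuous_apply f)
  obtain ⟨_, ⟨I, hI, rfl⟩, hinv⟩ :=
    (isCompact_coe_image_setOf_isMean h1).inter_iInter_nonempty _ hclosed fun F => by
      obtain ⟨J, hJ, hJF⟩ := h F
      exact ⟨J, ⟨J, hJ, rfl⟩, Set.mem_iInter₂.2 hJF⟩
  exact ⟨I, hI, Set.mem_iInter.1 hinv⟩

lemma exists_isMean_invariant_of_dense {A : Type*} [TopologicalSpace A] {τ : A → V → V}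
    (hτ : ∀ f, Continuous fun a => τ a f) {D : Set A} (hD : Dense D)
    (h : ∀ F ⊆ D, F.Finite → ∃ I, IsMean h1 I ∧ ∀ a ∈ F, ∀ f, I (τ a f) = I f) :
    ∃ I, IsMean h1 I ∧ ∀ a f, I (τ a f) = I f := by
  obtain ⟨I, hI, hinv⟩ : ∃ I, IsMean h1 I ∧ ∀ (a : D) f, I (τ a f) = I f := by
    refine exists_isMean_invariant_of_finset (fun a : D => τ a) fun F => ?_
    obtain ⟨J, hJ, hJF⟩ := h ((↑) '' (F : Set D)) (Subtype.coe_image_subset _ _)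
      (F.finite_toSet.image _)
    exact ⟨J, hJ, fun a ha => hJF a (Set.mem_image_of_mem _ ha)⟩
  exact ⟨I, hI, hI.apply_eq_of_dense hτ hD fun a ha => hinv ⟨a, ha⟩⟩

end Mean

section Translation

/-- Left translation by `s` as a self-map of `LUC S`. -/
def lTransLUC (s : S) (f : LUC S) : LUC S := ⟨lTrans f s, lTrans_mem f.2 s⟩

/-- Right translation by `s` as a self-map of `RUC S`. -/
def rTransRUC (s : S) (f : RUC S) : RUC S := ⟨rTrans f s, rTrans_mem f.2 s⟩

lemma continuous_lTransLUC (f : LUC S) : Continuous fun s => lTransLUC s f :=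
  (mem_LUC_iff.1 f.2).subtype_mk _

lemma continuous_rTransRUC (f : RUC S) : Continuous fun s => rTransRUC s f :=
  (mem_RUC_iff.1 f.2).subtype_mk _

lemma isLeftInvariantMean_iff {I : LUC S →ₗ[ℝ] ℝ} :
    IsLeftInvariantMean S I ↔ IsMean one_mem_LUC I ∧ ∀ s f, I (lTransLUC s f) = I f :=
  ⟨fun ⟨hone, hnonneg, hinv⟩ => ⟨⟨hone, hnonneg⟩, fun s f => hinv f f.2 s⟩,
    fun ⟨hI, hinv⟩ => ⟨hI.map_one, hI.map_nonneg, fun f hf s => hinv s ⟨f, hf⟩⟩⟩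

lemma isRightInvariantMean_iff {I : RUC S →ₗ[ℝ] ℝ} :
    IsRightInvariantMean S I ↔ IsMean one_mem_RUC I ∧ ∀ s f, I (rTransRUC s f) = I f :=
  ⟨fun ⟨hone, hnonneg, hinv⟩ => ⟨⟨hone, hnonneg⟩, fun s f => hinv f f.2 s⟩,
    fun ⟨hI, hinv⟩ => ⟨hI.map_one, hI.map_nonneg, fun f hf s => hinv s ⟨f, hf⟩⟩⟩

end Translation

section Pushforward

variable {T : Type*} [Semigroup T] [TopologicalSpace T] [ContinuousMul T]

lemma lTrans_compContinuous (φ : T →ₙ* S) (hφ : Continuous φ) (f : S →ᵇ ℝ) (t : T) :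
    lTrans (f.compContinuous ⟨φ, hφ⟩) t = (lTrans f (φ t)).compContinuous ⟨φ, hφ⟩ := by
  ext u
  simp

lemma rTrans_compContinuous (φ : T →ₙ* S) (hφ : Continuous φ) (f : S →ᵇ ℝ) (t : T) :
    rTrans (f.compContinuous ⟨φ, hφ⟩) t = (rTrans f (φ t)).compContinuous ⟨φ, hφ⟩ := by
  ext u
  simp

lemma compContinuous_mem_LUC (φ : T →ₙ* S) (hφ : Continuous φ) {f : S →ᵇ ℝ} (hf : f ∈ LUC S) :
    f.compContinuous ⟨φ, hφ⟩ ∈ LUC T := by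
  simp only [mem_LUC_iff, lTrans_compContinuous]
  exact (continuous_compContinuous _).comp (hf.comp hφ)

lemma compContinuous_mem_RUC (φ : T →ₙ* S) (hφ : Continuous φ) {f : S →ᵇ ℝ} (hf : f ∈ RUC S) :
    f.compContinuous ⟨φ, hφ⟩ ∈ RUC T := by
  simp only [mem_RUC_iff, rTrans_compContinuous]
  exact (continuous_compContinuous _).comp (hf.comp hφ)

lemma LeftAmenable.exists_isMean_invariant_range (hT : LeftAmenable T) (φ : T →ₙ* S)
    (hφ : Continuous φ) :
    ∃ I : LUC S →ₗ[ℝ] ℝ, IsMean one_mem_LUC I ∧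
      ∀ s ∈ Set.range φ, ∀ f, I (lTransLUC s f) = I f := by
  obtain ⟨J, hJ⟩ := hT
  obtain ⟨hmean, hinv⟩ := isLeftInvariantMean_iff.1 hJ
  refine ⟨_, hmean.comp_compContinuous ⟨φ, hφ⟩ fun _ => compContinuous_mem_LUC φ hφ, ?_⟩
  rintro _ ⟨t, rfl⟩ f
  exact (congrArg J (Subtype.ext (lTrans_compContinuous φ hφ f t).symm)).trans (hinv t _)

lemma RightAmenable.exists_isMean_invariant_range (hT : RightAmenable T) (φ : T →ₙ* S)
    (hφ : Continuous φ) :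
    ∃ I : RUC S →ₗ[ℝ] ℝ, IsMean one_mem_RUC I ∧
      ∀ s ∈ Set.range φ, ∀ f, I (rTransRUC s f) = I f := by
  obtain ⟨J, hJ⟩ := hT
  obtain ⟨hmean, hinv⟩ := isRightInvariantMean_iff.1 hJ
  refine ⟨_, hmean.comp_compContinuous ⟨φ, hφ⟩ fun _ => compContinuous_mem_RUC φ hφ, ?_⟩
  rintro _ ⟨t, rfl⟩ f
  exact (congrArg J (Subtype.ext (rTrans_compContinuous φ hφ f t).symm)).trans (hinv t _)

end Pushforward

section LocallyAmenable

variable {D : Set S}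

lemma leftAmenable_of_dense_of_finite_subset (hD : Dense D)
    (h : ∀ F ⊆ D, F.Finite → ∃ T : Subsemigroup S, F ⊆ T ∧ LeftAmenable T) :
    LeftAmenable S := by
  obtain ⟨I, hI⟩ := exists_isMean_invariant_of_dense (h1 := one_mem_LUC) continuous_lTransLUC hD
    fun F hFD hF => by
      obtain ⟨T, hFT, hT⟩ := h F hFD hF
      obtain ⟨J, hJ, hinv⟩ :=
        hT.exists_isMean_invariant_range (MulMemClass.subtype T) continuous_subtype_val
      exact ⟨J, hJ, fun s hs => hinv s ⟨⟨s, hFT hs⟩, rfl⟩⟩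
  exact ⟨I, isLeftInvariantMean_iff.2 hI⟩

lemma rightAmenable_of_dense_of_finite_subset (hD : Dense D)
    (h : ∀ F ⊆ D, F.Finite → ∃ T : Subsemigroup S, F ⊆ T ∧ RightAmenable T) :
    RightAmenable S := by
  obtain ⟨I, hI⟩ := exists_isMean_invariant_of_dense (h1 := one_mem_RUC) continuous_rTransRUC hD
    fun F hFD hF => by
      obtain ⟨T, hFT, hT⟩ := h F hFD hF
      obtain ⟨J, hJ, hinv⟩ :=
        hT.exists_isMean_invariant_range (MulMemClass.subtype T) continuous_subtype_val
      exact ⟨J, hJ, fun s hs => hinv s ⟨⟨s, hFT hs⟩, rfl⟩⟩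
  exact ⟨I, isRightInvariantMean_iff.2 hI⟩

theorem amenable_of_finitely_generated_amenable_general (hD : Dense D)
    (h : ∀ F ⊆ D, F.Finite → ∃ T : Subsemigroup S, F ⊆ T ∧ Amenable T) :
    Amenable S :=
  ⟨leftAmenable_of_dense_of_finite_subset hD fun F hFD hF =>
      (h F hFD hF).imp fun _ hT => ⟨hT.1, hT.2.1⟩,
    rightAmenable_of_dense_of_finite_subset hD fun F hFD hF =>
      (h F hFD hF).imp fun _ hT => ⟨hT.1, hT.2.2⟩⟩

end LocallyAmenable

/-- Corollary 4.8: if every finitely generated subsemigroup (with identity) of a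
topological semigroup `S` is amenable, then `S` is amenable. -/
theorem amenable_of_finitely_generated_amenable
    {S : Type*} [Monoid S] [TopologicalSpace S] [ContinuousMul S]
    (h : ∀ F : Finset S, Amenable ↥(Subsemigroup.closure (insert (1 : S) (F : Set S)))) :
    Amenable S :=
  amenable_of_finitely_generated_amenable_general dense_univ fun _ _ hF =>
    ⟨_, fun _ hs => Subsemigroup.subset_closure (Or.inr (hF.mem_toFinset.2 hs)), h hF.toFinset⟩

end Paper
end
end

section
/- (Bogolioubov–Krylov) Let S be an abelian semigroup acting on a non-empty compact Hausdorff space X from the left, with x ↦ s·x continuous for each s ∈ S. Then there exists a left S-invariant Radon probability measure on X. -/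
open BoundedContinuousFunction MeasureTheory Filter Topology

noncomputable section

/-!
A measure is invariant exactly when it annihilates the space `N` spanned by the functions
`T f - f`. Commuting averages `A` of the operators can be chosen to make `A g` uniformly small
for any given `g ∈ N`; since `A` preserves upper bounds, `g` cannot be bounded above by a negative
constant. Hence the zero functional on `N` is dominated by the sublinear functional `f ↦ sup f`,
and a Hahn–Banach extension of it is a state on `C(X, ℝ)` vanishing on `N`, which the Riesz–Markov
theorem turns into the required measure.
-/

open scoped CompactlySupported

section CesaroMean

variable {R : Type*}

/-- The average `(1 + a + ⋯ + a ^ (n - 1)) / n` of the first `n` powers of an element of a real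
algebra. It takes the junk value `0` at `n = 0`. -/
def cesaroMean [Ring R] [Algebra ℝ R] (a : R) (n : ℕ) : R :=
  (n : ℝ)⁻¹ • ∑ i ∈ Finset.range n, a ^ i

theorem cesaroMean_mul_sub_one [Ring R] [Algebra ℝ R] (a : R) (n : ℕ) :
    cesaroMean a n * (a - 1) = (n : ℝ)⁻¹ • (a ^ n - 1) := by
  rw [cesaroMean, smul_mul_assoc, geom_sum_mul]

theorem cesaroMean_mem [Ring R] [Algebra ℝ R] {Γ : Submonoid R} (hΓ : Convex ℝ (Γ : Set R))
    {a : R} (ha : a ∈ Γ) {n : ℕ} (hn : n ≠ 0) : cesaroMean a n ∈ Γ := by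
  rw [cesaroMean, Finset.smul_sum]
  refine hΓ.sum_mem (fun _ _ => by positivity) ?_ fun i _ => pow_mem ha i
  simp [hn]

theorem tendsto_cesaroMean_mul_sub_one [SeminormedRing R] [NormedAlgebra ℝ R] {a : R} {C : ℝ}
    (ha : ∀ n, ‖a ^ n‖ ≤ C) : Tendsto (fun n => cesaroMean a n * (a - 1)) atTop (𝓝 0) := by
  simp_rw [cesaroMean_mul_sub_one]
  refine (tendsto_inv_atTop_nhds_zero_nat (𝕜 := ℝ)).zero_smul_isBoundedUnder_le
    (isBoundedUnder_of ⟨C + ‖(1 : R)‖, fun n => ?_⟩)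
  exact (norm_sub_le _ _).trans (by gcongr; exact ha n)

end CesaroMean

section Coboundaries

variable {E : Type*} [SeminormedAddCommGroup E] [NormedSpace ℝ E]

/-- The space of coboundaries of a monoid `Γ` of operators: the span of all `A f - f` with `A ∈ Γ`.
A linear functional is `Γ`-invariant if and only if it vanishes there. -/
def coboundaries (Γ : Submonoid (E →L[ℝ] E)) : Submodule ℝ E :=
  ⨆ A : Γ, (A.1 - 1).range

theorem apply_sub_self_mem_coboundaries {Γ : Submonoid (E →L[ℝ] E)} {A : E →L[ℝ] E} (hA : A ∈ Γ)
    (f : E) : A f - f ∈ coboundaries Γ :=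
  Submodule.mem_iSup_of_mem (⟨A, hA⟩ : Γ) ⟨f, rfl⟩

theorem exists_mem_norm_apply_sub_self_lt {Γ : Submonoid (E →L[ℝ] E)}
    (hconv : Convex ℝ (Γ : Set (E →L[ℝ] E))) (hnorm : ∀ A ∈ Γ, ‖A‖ ≤ 1)
    {A : E →L[ℝ] E} (hA : A ∈ Γ) (f : E) {ε : ℝ} (hε : 0 < ε) :
    ∃ B ∈ Γ, ‖B (A f - f)‖ < ε := by
  have hlim : Tendsto (fun n => ‖cesaroMean A n (A f - f)‖) atTop (𝓝 0) := by
    have hmean := tendsto_cesaroMean_mul_sub_one fun n => hnorm _ (pow_mem hA n)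
    simpa using (hmean.eval_const f).norm
  obtain ⟨n, hn_lt, hn_ne⟩ :=
    ((hlim.eventually_lt_const hε).and (eventually_ne_atTop 0)).exists
  exact ⟨cesaroMean A n, cesaroMean_mem hconv hA hn_ne, hn_lt⟩

theorem exists_mem_norm_apply_lt_of_mem_coboundaries {Γ : Submonoid (E →L[ℝ] E)}
    (hconv : Convex ℝ (Γ : Set (E →L[ℝ] E))) (hnorm : ∀ A ∈ Γ, ‖A‖ ≤ 1)
    (hcomm : ∀ A ∈ Γ, ∀ B ∈ Γ, Commute A B) {g : E} (hg : g ∈ coboundaries Γ) {ε : ℝ}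
    (hε : 0 < ε) : ∃ A ∈ Γ, ‖A g‖ < ε := by
  have hcontr {A : E →L[ℝ] E} (hA : A ∈ Γ) (f : E) : ‖A f‖ ≤ ‖f‖ := by
    simpa using A.le_of_opNorm_le (hnorm A hA) f
  induction hg using Submodule.iSup_induction' generalizing ε with
  | mem A g hg =>
    obtain ⟨f, rfl⟩ := hg
    exact exists_mem_norm_apply_sub_self_lt hconv hnorm A.2 f hε
  | zero => exact ⟨1, one_mem Γ, by simpa using hε⟩
  | add g h _ _ ihg ihh =>
    obtain ⟨A, hA, hAg⟩ := ihg (half_pos hε)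
    obtain ⟨B, hB, hBh⟩ := ihh (half_pos hε)
    refine ⟨A * B, mul_mem hA hB, ?_⟩
    calc ‖(A * B) (g + h)‖ = ‖B (A g) + A (B h)‖ := by
          rw [map_add, ← mul_apply_eq_comp B A, (hcomm B hB A hA).eq, mul_apply_eq_comp A B h]
      _ ≤ ‖B (A g)‖ + ‖A (B h)‖ := norm_add_le _ _
      _ ≤ ‖A g‖ + ‖B h‖ := add_le_add (hcontr hB _) (hcontr hA _)
      _ < ε := by linarith

end Coboundaries

section MarkovOperators

variable {X : Type*} [TopologicalSpace X]

variable (X) in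
/-- The monoid of Markov operators on `C(X, ℝ)`: the positive operators that fix the constants. -/
def markovOperators : Submonoid (C(X, ℝ) →L[ℝ] C(X, ℝ)) where
  carrier := {A | (∀ f, 0 ≤ f → 0 ≤ A f) ∧ A 1 = 1}
  one_mem' := ⟨fun _ hf => hf, rfl⟩
  mul_mem' := fun {A _} hA hB =>
    ⟨fun f hf => hA.1 _ (hB.1 f hf), (congrArg A hB.2).trans hA.2⟩

theorem convex_markovOperators :
    Convex ℝ (markovOperators X : Set (C(X, ℝ) →L[ℝ] C(X, ℝ))) := by
  rintro A ⟨hA_nonneg, hA_one⟩ B ⟨hB_nonneg, hB_one⟩ a b ha hb hab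
  refine ⟨fun f hf => ?_, ?_⟩
  · exact add_nonneg (smul_nonneg ha (hA_nonneg f hf)) (smul_nonneg hb (hB_nonneg f hf))
  · simp [hA_one, hB_one, ← add_smul, hab]

theorem apply_le_of_mem_markovOperators {A : C(X, ℝ) →L[ℝ] C(X, ℝ)} (hA : A ∈ markovOperators X)
    {f : C(X, ℝ)} {c : ℝ} (hf : ∀ x, f x ≤ c) (x : X) : A f x ≤ c := by
  have hnonneg : 0 ≤ A (c • 1 - f) := hA.1 _ fun x => by simpa using hf x
  simpa [hA.2] using hnonneg x

variable [CompactSpace X]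

theorem norm_le_one_of_mem_markovOperators {A : C(X, ℝ) →L[ℝ] C(X, ℝ)}
    (hA : A ∈ markovOperators X) : ‖A‖ ≤ 1 := by
  refine A.opNorm_le_bound zero_le_one fun f => ?_
  rw [one_mul, ContinuousMap.norm_le _ (norm_nonneg f)]
  refine fun x => abs_le'.2 ⟨apply_le_of_mem_markovOperators hA f.apply_le_norm x, ?_⟩
  have hneg := apply_le_of_mem_markovOperators hA (f := -f) (-f).apply_le_norm x
  simpa only [map_neg, ContinuousMap.neg_apply, norm_neg] using hneg

theorem exists_nonneg_apply_of_mem_coboundaries [Nonempty X]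
    {Γ : Submonoid (C(X, ℝ) →L[ℝ] C(X, ℝ))} (hΓ : Γ ≤ markovOperators X)
    (hconv : Convex ℝ (Γ : Set (C(X, ℝ) →L[ℝ] C(X, ℝ))))
    (hcomm : ∀ A ∈ Γ, ∀ B ∈ Γ, Commute A B) {g : C(X, ℝ)} (hg : g ∈ coboundaries Γ) :
    ∃ x, 0 ≤ g x := by
  obtain ⟨x, -, hx⟩ := isCompact_univ.exists_isMaxOn Set.univ_nonempty g.continuous.continuousOn
  refine ⟨x, ?_⟩
  by_contra! hneg
  obtain ⟨A, hA, hAg⟩ := exists_mem_norm_apply_lt_of_mem_coboundaries hconv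
    (fun A hA => norm_le_one_of_mem_markovOperators (hΓ hA)) hcomm hg (neg_pos.2 hneg)
  have hupper : A g x ≤ g x :=
    apply_le_of_mem_markovOperators (hΓ hA) (fun y => hx (Set.mem_univ y)) x
  have hlower : -‖A g‖ ≤ A g x := (A g).neg_norm_le_apply x
  linarith

end MarkovOperators

section Koopman

variable {X : Type*} [TopologicalSpace X]

/-- The Koopman operator `f ↦ f ∘ φ` of a continuous self-map `φ`. -/
def koopmanOperator (φ : C(X, X)) : C(X, ℝ) →L[ℝ] C(X, ℝ) where
  toLinearMap := (ContinuousMap.compRightAlgHom ℝ ℝ φ).toLinearMap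
  cont := φ.continuous_precomp

theorem commute_koopmanOperator {φ ψ : C(X, X)} (h : φ.comp ψ = ψ.comp φ) :
    Commute (koopmanOperator φ) (koopmanOperator ψ) := by
  ext f x
  exact congrArg f (DFunLike.congr_fun h x).symm

theorem koopmanOperator_mem_markovOperators (φ : C(X, X)) :
    koopmanOperator φ ∈ markovOperators X :=
  ⟨fun _ hf x => hf (φ x), rfl⟩

end Koopman

section States

variable {X : Type*} [TopologicalSpace X] [CompactSpace X]

theorem exists_linearMap_le_iSup_of_forall_mem_exists_nonneg (N : Submodule ℝ C(X, ℝ))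
    (hN : ∀ g ∈ N, ∃ x, 0 ≤ g x) :
    ∃ L : C(X, ℝ) →ₗ[ℝ] ℝ, (∀ g ∈ N, L g = 0) ∧ ∀ f, L f ≤ ⨆ x, f x := by
  have : Nonempty X := (hN 0 N.zero_mem).nonempty
  have hbdd (f : C(X, ℝ)) : BddAbove (Set.range f) := (isCompact_range f.continuous).bddAbove
  obtain ⟨L, hLN, hL⟩ := exists_extension_of_le_sublinear ⟨N, 0⟩ (fun f : C(X, ℝ) => ⨆ x, f x)
    (fun c hc f => (Real.mul_iSup_of_nonneg hc.le _).symm)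
    (fun f g => ciSup_le fun x => add_le_add (le_ciSup (hbdd f) x) (le_ciSup (hbdd g) x))
    (fun g => (hN g g.2).elim fun x hx => hx.trans (le_ciSup (hbdd g) x))
  exact ⟨L, fun g hg => hLN ⟨g, hg⟩, hL⟩

theorem exists_positiveLinearMap_map_one_of_forall_mem_exists_nonneg (N : Submodule ℝ C(X, ℝ))
    (hN : ∀ g ∈ N, ∃ x, 0 ≤ g x) :
    ∃ L : C(X, ℝ) →ₚ[ℝ] ℝ, L 1 = 1 ∧ ∀ g ∈ N, L g = 0 := by
  have : Nonempty X := (hN 0 N.zero_mem).nonempty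
  obtain ⟨L, hLN, hL⟩ := exists_linearMap_le_iSup_of_forall_mem_exists_nonneg N hN
  have hL_le {f : C(X, ℝ)} {c : ℝ} (hf : ∀ x, f x ≤ c) : L f ≤ c := (hL f).trans (ciSup_le hf)
  have hL_ge {f : C(X, ℝ)} {c : ℝ} (hf : ∀ x, c ≤ f x) : c ≤ L f := by
    have hneg : L (-f) ≤ -c := hL_le fun x => neg_le_neg (hf x)
    simpa only [map_neg, neg_le_neg_iff] using hneg
  exact ⟨.mk₀ L fun f hf => hL_ge hf, le_antisymm (hL_le fun _ => le_rfl) (hL_ge fun _ => le_rfl),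
    hLN⟩

variable [T2Space X] [MeasurableSpace X] [BorelSpace X]

theorem exists_regular_integral_eq (L : C(X, ℝ) →ₚ[ℝ] ℝ) :
    ∃ μ : Measure X, IsFiniteMeasure μ ∧ μ.Regular ∧ ∀ f : C(X, ℝ), ∫ x, f x ∂μ = L f := by
  let Λ : C_c(X, ℝ) →ₚ[ℝ] ℝ :=
    { toFun f := L f.toContinuousMap
      map_add' f g := map_add L f.toContinuousMap g.toContinuousMap
      map_smul' c f := map_smul L c f.toContinuousMap
      monotone' _ _ hfg := OrderHomClass.mono L hfg }
  exact ⟨RealRMK.rieszMeasure Λ, inferInstance, inferInstance, fun f =>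
    RealRMK.integral_rieszMeasure Λ (CompactlySupportedContinuousMap.continuousMapEquiv f)⟩

theorem exists_isProbabilityMeasure_regular_integral_eq (L : C(X, ℝ) →ₚ[ℝ] ℝ) (hL : L 1 = 1) :
    ∃ μ : Measure X, IsProbabilityMeasure μ ∧ μ.Regular ∧ ∀ f : C(X, ℝ), ∫ x, f x ∂μ = L f := by
  obtain ⟨μ, _, hreg, hμ⟩ := exists_regular_integral_eq L
  have hmass : μ.real Set.univ = 1 := by simpa [hL] using hμ 1
  exact ⟨μ, isProbabilityMeasure_iff_real.2 hmass, hreg, hμ⟩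

end States

theorem exists_isProbabilityMeasure_regular_forall_mem_integral_apply_eq {X : Type*}
    [TopologicalSpace X] [CompactSpace X] [T2Space X] [Nonempty X] [MeasurableSpace X]
    [BorelSpace X] {Γ : Submonoid (C(X, ℝ) →L[ℝ] C(X, ℝ))} (hΓ : Γ ≤ markovOperators X)
    (hconv : Convex ℝ (Γ : Set (C(X, ℝ) →L[ℝ] C(X, ℝ))))
    (hcomm : ∀ A ∈ Γ, ∀ B ∈ Γ, Commute A B) :
    ∃ μ : Measure X, IsProbabilityMeasure μ ∧ μ.Regular ∧
      ∀ A ∈ Γ, ∀ f : C(X, ℝ), ∫ x, A f x ∂μ = ∫ x, f x ∂μ := by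
  obtain ⟨L, hL_one, hL⟩ := exists_positiveLinearMap_map_one_of_forall_mem_exists_nonneg
    (coboundaries Γ) fun g => exists_nonneg_apply_of_mem_coboundaries hΓ hconv hcomm
  obtain ⟨μ, hprob, hreg, hμ⟩ := exists_isProbabilityMeasure_regular_integral_eq L hL_one
  refine ⟨μ, hprob, hreg, fun A hA f => ?_⟩
  rw [hμ, hμ, ← sub_eq_zero, ← map_sub]
  exact hL _ (apply_sub_self_mem_coboundaries hA f)

theorem bogolioubov_krylov_general {ι X : Type*} [TopologicalSpace X] [CompactSpace X] [T2Space X]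
    [Nonempty X] [MeasurableSpace X] [BorelSpace X] (T : ι → C(X, ℝ) →L[ℝ] C(X, ℝ))
    (hT : ∀ i, T i ∈ markovOperators X) (hcomm : ∀ i j, Commute (T i) (T j)) :
    ∃ μ : Measure X, IsProbabilityMeasure μ ∧ μ.Regular ∧
      ∀ (f : C(X, ℝ)) (i : ι), ∫ x, T i f x ∂μ = ∫ x, f x ∂μ := by
  let 𝒜 := Algebra.adjoin ℝ (Set.range T)
  have h𝒜 : ∀ A ∈ 𝒜, ∀ B ∈ 𝒜, Commute A B := fun A hA B hB =>
    Algebra.commute_of_mem_adjoin_of_forall_mem_commute hB <| Set.forall_mem_range.2 fun j =>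
      (Algebra.commute_of_mem_adjoin_of_forall_mem_commute hA <|
        Set.forall_mem_range.2 fun i => hcomm j i).symm
  obtain ⟨μ, hprob, hreg, hμ⟩ :=
    exists_isProbabilityMeasure_regular_forall_mem_integral_apply_eq
      (Γ := markovOperators X ⊓ 𝒜.toSubmonoid) inf_le_left
      (convex_markovOperators.inter 𝒜.toSubmodule.convex)
      fun A hA B hB => h𝒜 A hA.2 B hB.2
  exact ⟨μ, hprob, hreg, fun f i =>
    hμ (T i) ⟨hT i, Algebra.subset_adjoin (Set.mem_range_self i)⟩ f⟩

/-- Theorem 4.11 (Bogolioubov–Krylov): an abelian semigroup acting on a non-empty compact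
Hausdorff space (with each map `x ↦ s·x` continuous) admits an invariant Radon probability
measure. -/
theorem bogolioubov_krylov
    {S X : Type*} [CommSemigroup S]
    [TopologicalSpace X] [CompactSpace X] [T2Space X] [Nonempty X]
    [MeasurableSpace X] [BorelSpace X]
    (act : S → X → X)
    (hc : ∀ s, Continuous (act s))
    (hmul : ∀ s s' x, act (s * s') x = act s (act s' x)) :
    ∃ μ : Measure X, IsProbabilityMeasure μ ∧ μ.Regular ∧
      ∀ (f : C(X, ℝ)) (s : S), ∫ x, f (act s x) ∂μ = ∫ x, f x ∂μ :=
  bogolioubov_krylov_general (fun s => koopmanOperator ⟨act s, hc s⟩)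
    (fun _ => koopmanOperator_mem_markovOperators _) fun s t => commute_koopmanOperator <|
      ContinuousMap.ext fun x => by simp [← hmul, mul_comm s t]
end
end
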